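/- arXiv:2511.19309 — 2 statements merged into one kernel-verified Lean document; each statement's English description precedes it below -/
import Mathlib

section
/- Let 𝒫 be a generalized perimeter, L > 0, R > 0, E₀ ∈ 𝔠_L ∩ 𝔐_R, and let {E^0_t}_{t ≥ 0} be a flat flow with initial datum E₀ along a vanishing sequence {h_k} of time steps. Then the flat flow satisfies the semigroup property: for every t̄ ≥ 0 and Δt ≥ 0, the approximate flat solutions with initial datum E^0_{t̄} and time steps h_k converge at time Δt to E^0_{t̄+Δt}, i.e. |E^{(h_k)}_{Δt}[E^0_{t̄}] Δ E^0_{t̄+Δt}| → 0 as k → ∞. -/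
open MeasureTheory Filter Set
open scoped ENNReal

noncomputable section

/-- The flat torus `𝕋^{d-1}`. -/
abbrev Torus (d : ℕ) : Type := Fin (d-1) → AddCircle (1:ℝ)

/-- The periodic strip `𝕋^{d-1} × ℝ`. -/
abbrev Cyl (d : ℕ) : Type := Torus d × ℝ

/-- The subgraph of a function `g : 𝕋^{d-1} → ℝ`. -/
def subgraph (d : ℕ) (g : Torus d → ℝ) : Set (Cyl d) := {x | x.2 ≤ g x.1}

/-- The class `𝔠_L` of periodic `L`-Lipschitz subgraphs. -/
def LipClass (d : ℕ) (L : ℝ) : Set (Set (Cyl d)) :=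
  {E | ∃ g : Torus d → ℝ, LipschitzWith (Real.toNNReal L) g ∧ E = subgraph d g}

/-- The slab `𝕊^d_R = 𝕋^{d-1} × (-R, R)`. -/
def SlabR (d : ℕ) (R : ℝ) : Set (Cyl d) := {x | -R < x.2 ∧ x.2 < R}

/-- The class `𝔐_R` of measurable sets squeezed between two halfspaces. -/
def MR (d : ℕ) (R : ℝ) : Set (Set (Cyl d)) :=
  {E | MeasurableSet E ∧ {x : Cyl d | x.2 < -R} ⊆ E ∧ E ⊆ {x : Cyl d | x.2 < R}}

/-- The periodic halfspace `H_λ = 𝕋^{d-1} × (-∞, λ)`. -/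
def halfspace (d : ℕ) (lam : ℝ) : Set (Cyl d) := {x | x.2 < lam}

/-- Translation of `𝕋^{d-1} × ℝ` by a vector `τ ∈ ℝ^d = ℝ^{d-1} × ℝ`,
acting through the quotient. -/
def translCyl (d : ℕ) (τ : (Fin (d-1) → ℝ) × ℝ) (x : Cyl d) : Cyl d :=
  (fun i => x.1 i + (τ.1 i : AddCircle (1:ℝ)), x.2 + τ.2)

/-- A generalized perimeter: a functional `𝒫 : 𝔐 → [0,+∞]` satisfying properties
(i)-(vi) of Definition 1.2. -/
structure GenPerimeter (d : ℕ) where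
  P : Set (Cyl d) → ℝ≥0∞
  /-- (i) finiteness on periodic Lipschitz subgraphs -/
  lip_finite : ∀ L : ℝ, 0 < L → ∀ E ∈ LipClass d L, P E < ⊤
  /-- (ii) `𝒫(∅) = 0` -/
  empty_eq : P ∅ = 0
  /-- (ii) `𝒫(𝕋^{d-1} × ℝ) = 0` -/
  univ_eq : P Set.univ = 0
  /-- (iii) invariance under modifications on null sets -/
  congr_ae : ∀ E E' : Set (Cyl d), volume (symmDiff E E') = 0 → P E = P E'
  /-- (iv) lower semicontinuity w.r.t. local `L¹` convergence -/
  lsc : ∀ (En : ℕ → Set (Cyl d)) (E : Set (Cyl d)),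
      (∀ R : ℝ, 0 < R →
        Tendsto (fun n => volume (symmDiff (En n) E ∩ SlabR d R)) atTop (nhds 0)) →
      P E ≤ liminf (fun n => P (En n)) atTop
  /-- (v) submodularity -/
  submodular : ∀ E F : Set (Cyl d), P (E ∪ F) + P (E ∩ F) ≤ P E + P F
  /-- (vi) translational invariance -/
  transl_inv : ∀ (E : Set (Cyl d)) (τ : (Fin (d-1) → ℝ) × ℝ), P (translCyl d τ '' E) = P E

/-- Signed distance from a set `E`. -/
def sdist (d : ℕ) (E : Set (Cyl d)) (x : Cyl d) : ℝ :=
  Metric.infDist x E - Metric.infDist x Eᶜ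

/-- The incremental functional `𝓕̃_h(E, F) = 𝒫(F) + (1/h) ∫_{F ∩ 𝕊^d_R} sdist_E`. -/
def Ftilde (d : ℕ) (P : GenPerimeter d) (R h : ℝ) (E F : Set (Cyl d)) : EReal :=
  (P.P F : EReal) + (((1/h) * ∫ x in F ∩ SlabR d R, sdist d E x) : ℝ)

/-- `F` minimizes `𝓕̃_h(E, ·)` in `𝔐_R`. -/
def IsMinimizer (d : ℕ) (P : GenPerimeter d) (R h : ℝ) (E F : Set (Cyl d)) : Prop :=
  F ∈ MR d R ∧ ∀ F' ∈ MR d R, Ftilde d P R h E F ≤ Ftilde d P R h E F'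

/-- The discrete-in-time approximate flat solution with time step `h`, initial datum `E₀`:
`Eh k` is the set at time `k h`; each step is the (unique, Lipschitz-subgraph) minimizer of
the incremental problem. -/
def IsApproxFlow (d : ℕ) (P : GenPerimeter d) (L R h : ℝ) (E₀ : Set (Cyl d))
    (Eh : ℕ → Set (Cyl d)) : Prop :=
  Eh 0 = E₀ ∧ ∀ k : ℕ, Eh (k+1) ∈ LipClass d L ∧ IsMinimizer d P R h (Eh k) (Eh (k+1))

/-- A flat flow `E0` with initial datum `E₀` along the vanishing sequence `hk` of time steps:
`Eflow k` is the approximate flat solution with time step `hk k`, and for every `t ≥ 0` the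
approximate solutions at time `t` converge in measure to `E0 t ∈ 𝔠_L`. -/
def IsFlatFlow (d : ℕ) (P : GenPerimeter d) (L R : ℝ) (hk : ℕ → ℝ) (E₀ : Set (Cyl d))
    (Eflow : ℕ → ℕ → Set (Cyl d)) (E0 : ℝ → Set (Cyl d)) : Prop :=
  E0 0 = E₀ ∧ (∀ t : ℝ, 0 ≤ t → E0 t ∈ LipClass d L) ∧
  (∀ k, IsApproxFlow d P L R (hk k) E₀ (Eflow k)) ∧
  (∀ t : ℝ, 0 ≤ t →
    Tendsto (fun k => volume (symmDiff (Eflow k ⌊t / hk k⌋₊) (E0 t))) atTop (nhds 0))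

lemma vol_inv (d : ℕ) : Measure.IsAddLeftInvariant (volume : Measure (Cyl d)) := by
  have h1 : Measure.IsAddLeftInvariant (volume : Measure (Torus d)) :=
    inferInstanceAs (Measure.IsAddLeftInvariant
      (Measure.pi fun _ : Fin (d-1) => (volume : Measure (AddCircle (1:ℝ)))))
  exact Measure.prod.instIsAddLeftInvariant

lemma circ (u : AddCircle (1:ℝ)) (η r : ℝ) (hη : 0 ≤ η) (hr : η ≤ r) (hu : ‖u‖ ≤ r) :
    ∃ w : AddCircle (1:ℝ), ‖w‖ ≤ r - η ∧ ‖u - w‖ ≤ η := by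
  obtain ⟨x, rfl⟩ := QuotientAddGroup.mk_surjective u
  change ‖(x : AddCircle (1:ℝ))‖ ≤ r at hu
  rw [UnitAddCircle.norm_eq] at hu
  have hx : ((QuotientAddGroup.mk x : AddCircle (1:ℝ))) =
      ((x - round x : ℝ) : AddCircle (1:ℝ)) := by
    change (x : AddCircle (1:ℝ)) = _
    rw [AddCircle.coe_sub]
    have : ((round x : ℝ) : AddCircle (1:ℝ)) = 0 := by
      rw [AddCircle.coe_eq_zero_iff]; exact ⟨round x, by simp⟩
    rw [this, sub_zero]
  rw [hx]
  set t := x - round x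
  have hn : ∀ y : ℝ, ‖(y : AddCircle (1:ℝ))‖ ≤ |y| := fun y => by
    have := round_le y 0
    rw [UnitAddCircle.norm_eq]
    simpa using this
  by_cases h0 : r = 0
  · subst h0
    have : η = 0 := le_antisymm hr hη
    subst this
    have ht : t = 0 := abs_eq_zero.1 (le_antisymm hu (abs_nonneg _))
    exact ⟨0, by simp, by simp [ht]⟩
  have hrp : 0 < r := lt_of_le_of_ne (hη.trans hr) (Ne.symm h0)
  refine ⟨(((1 - η/r) * t : ℝ)), ?_, ?_⟩
  · refine (hn _).trans ?_
    have : 0 ≤ 1 - η / r := by rw [sub_nonneg, div_le_one hrp]; exact hr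
    rw [abs_mul, abs_of_nonneg this]
    calc _ ≤ (1 - η/r) * r := by gcongr
      _ = r - η := by field_simp
  · rw [← AddCircle.coe_sub]
    refine (hn _).trans ?_
    have : t - (1 - η/r)*t = η/r*t := by ring
    rw [this, abs_mul, abs_of_nonneg (by positivity)]
    calc _ ≤ η/r * r := by gcongr
      _ = η := by field_simp

lemma torus_geo (d : ℕ) (x z : Torus d) (η r : ℝ) (hη : 0 ≤ η) (hr : η ≤ r)
    (h : dist x z ≤ r) : ∃ w : Torus d, dist x w ≤ r - η ∧ dist w z ≤ η := by
  have hr0 : 0 ≤ r := hη.trans hr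
  rw [dist_pi_le_iff hr0] at h
  have : ∀ i, ∃ w : AddCircle (1:ℝ), ‖w‖ ≤ r - η ∧ ‖(z i - x i) - w‖ ≤ η := fun i =>
    circ _ _ _ hη hr (by rw [← dist_eq_norm, dist_comm]; exact h i)
  choose w hw1 hw2 using this
  refine ⟨fun i => x i + w i, ?_, ?_⟩
  · rw [dist_pi_le_iff (by linarith)]
    intro i
    simpa using hw1 i
  · rw [dist_pi_le_iff hη]
    intro i
    rw [dist_comm, dist_eq_norm]
    have := hw2 i
    rwa [sub_sub] at this

/-- strict vertical monotonicity of the distance from a Lipschitz lower set -/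
lemma infDist_strict (d : ℕ) (K : ℝ) (hK : 0 ≤ K) (S : Set (Cyl d)) (hne : S.Nonempty)
    (hS : ∀ z ∈ S, ∀ w' : Torus d, ∀ s : ℝ, s ≤ z.2 - K * dist w' z.1 → (w', s) ∈ S)
    (x' : Torus d) (t δ : ℝ) (hδ : 0 < δ) (hx : (x', t) ∉ S) :
    Metric.infDist (x', t) S < Metric.infDist (x', t + δ) S := by
  have h1K : 0 < 1 + K := by linarith
  have hc : 0 < δ / (1 + K) := by positivity
  suffices Metric.infDist (x', t) S + δ / (1 + K) ≤ Metric.infDist (x', t + δ) S by linarith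
  rw [Metric.le_infDist hne]
  rintro ⟨z', s⟩ hz
  set η := δ / (1 + K) with hηd
  have hηK : η * (1 + K) = δ := by rw [hηd]; field_simp
  set ρ := dist (x', t + δ) (z', s) with hρ
  have h1 : dist x' z' ≤ ρ := by rw [hρ, Prod.dist_eq]; exact le_max_left _ _
  have h2 : |t + δ - s| ≤ ρ := by
    rw [hρ, Prod.dist_eq, ← Real.dist_eq]; exact le_max_right _ _
  have h3 := (abs_le.1 h2).2
  by_cases hc : η ≤ ρ
  · obtain ⟨w', hw1, hw2⟩ := torus_geo d x' z' η ρ (by positivity) hc h1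
    have hw : (w', min t (s - K * η)) ∈ S := by
      refine hS _ hz _ _ ((min_le_right _ _).trans ?_)
      have := mul_le_mul_of_nonneg_left hw2 hK
      simp only; linarith
    have := Metric.infDist_le_dist_of_mem (x := (x', t)) hw
    have h4 : dist (x', t) (w', min t (s - K * η)) ≤ ρ - η := by
      rw [Prod.dist_eq]
      refine max_le hw1 ?_
      rw [Real.dist_eq, abs_of_nonneg (sub_nonneg.2 (min_le_left _ _))]
      rcases min_choice t (s - K * η) with h | h <;> simp only [h] <;> nlinarith
    linarith
  · exfalso
    push Not at hc
    apply hx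
    refine hS _ hz _ _ ?_
    have := mul_le_mul_of_nonneg_left h1 hK
    have := mul_lt_mul_of_pos_right hc h1K
    simp only; nlinarith

lemma mem_subG (d : ℕ) (g : Torus d → ℝ) (x : Cyl d) : x ∈ subgraph d g ↔ x.2 ≤ g x.1 := Iff.rfl

lemma lip_le (d : ℕ) (K : NNReal) (g : Torus d → ℝ) (hg : LipschitzWith K g) (x y : Torus d) :
    g x ≤ g y + K * dist x y := by
  have := (abs_le.1 ((Real.dist_eq _ _).symm.le.trans (hg.dist_le_mul x y))).2
  linarith

lemma sub_closed (d : ℕ) (g : Torus d → ℝ) (hg : Continuous g) : IsClosed (subgraph d g) :=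
  isClosed_le continuous_snd (hg.comp continuous_fst)

lemma sub_ne (d : ℕ) (g : Torus d → ℝ) : (subgraph d g).Nonempty :=
  ⟨(0, g 0), by simp [subgraph]⟩

lemma sub_cne (d : ℕ) (g : Torus d → ℝ) : ((subgraph d g)ᶜ).Nonempty :=
  ⟨(0, g 0 + 1), by simp [subgraph]⟩

lemma infDist_compl (d : ℕ) (g : Torus d → ℝ) (x' : Torus d) (t : ℝ) :
    Metric.infDist (x', t) (subgraph d g)ᶜ =
      Metric.infDist (x', -t) {z : Cyl d | z.2 < - g z.1} := by
  have hi : Isometry (fun z : Cyl d => ((z.1, -z.2) : Cyl d)) := by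
    refine Isometry.of_dist_eq fun a b => ?_
    simp [Prod.dist_eq]
  rw [← Metric.infDist_image hi]
  congr 1
  ext z
  simp only [mem_image, mem_compl_iff, mem_subG, not_le, mem_ofPred_eq]
  constructor
  · rintro ⟨y, hy, rfl⟩; simpa using hy
  · intro h; exact ⟨(z.1, -z.2), by simp only; linarith, by simp⟩

lemma sdist_strict (d : ℕ) (K : NNReal) (g : Torus d → ℝ) (hg : LipschitzWith K g)
    (x' : Torus d) (t δ : ℝ) (hδ : 0 < δ) :
    sdist d (subgraph d g) (x', t) < sdist d (subgraph d g) (x', t + δ) := by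
  unfold sdist
  by_cases h1 : (x', t) ∈ subgraph d g
  · by_cases h2 : (x', t + δ) ∈ subgraph d g
    · rw [Metric.infDist_zero_of_mem h1, Metric.infDist_zero_of_mem h2, infDist_compl,
        infDist_compl]
      have := infDist_strict d K K.2 {z : Cyl d | z.2 < - g z.1} ⟨(0, - g 0 - 1), by simp⟩ (by
        intro z hz w' s hs
        have := lip_le d K g hg w' z.1
        simp only [mem_ofPred_eq] at hz ⊢
        linarith) x' (-(t + δ)) δ hδ (by
          simp only [mem_ofPred_eq, mem_subG] at h2 ⊢
          linarith)
      simp only [neg_add_rev, neg_add_cancel_comm] at this ⊢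
      linarith
    · have := ((sub_closed d g hg.continuous).notMem_iff_infDist_pos (sub_ne d g)).1 h2
      rw [Metric.infDist_zero_of_mem h1, Metric.infDist_zero_of_mem (show _ ∈ (subgraph d g)ᶜ from h2)]
      have := Metric.infDist_nonneg (x := (x', t)) (s := (subgraph d g)ᶜ)
      linarith
  · have h2 : (x', t + δ) ∉ subgraph d g := by
      simp only [mem_subG] at h1 ⊢; linarith
    rw [Metric.infDist_zero_of_mem (show _ ∈ (subgraph d g)ᶜ from h1),
      Metric.infDist_zero_of_mem (show _ ∈ (subgraph d g)ᶜ from h2)]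
    have := infDist_strict d K K.2 (subgraph d g) (sub_ne d g) (by
        intro z hz w' s hs
        have := lip_le d K g hg z.1 w'
        rw [dist_comm] at this
        simp only [mem_subG] at hz ⊢
        linarith) x' t δ hδ h1
    linarith

lemma sdist_cont (d : ℕ) (E : Set (Cyl d)) : Continuous (sdist d E) :=
  (Metric.continuous_infDist_pt _).sub (Metric.continuous_infDist_pt _)

lemma sdist_anti (d : ℕ) (f g : Torus d → ℝ) (h : ∀ x, f x ≤ g x) (x : Cyl d) :
    sdist d (subgraph d g) x ≤ sdist d (subgraph d f) x := by
  have hs : subgraph d f ⊆ subgraph d g := fun y hy => le_trans hy (h _)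
  have h1 := Metric.infDist_le_infDist_of_subset (x := x) hs (sub_ne d f)
  have h2 := Metric.infDist_le_infDist_of_subset (x := x) (compl_subset_compl.2 hs) (sub_cne d g)
  unfold sdist; linarith

lemma sdist_shift (d : ℕ) (g : Torus d → ℝ) (c : ℝ) (x' : Torus d) (t : ℝ) :
    sdist d (subgraph d fun y => g y + c) (x', t + c) = sdist d (subgraph d g) (x', t) := by
  have hi : Isometry (fun z : Cyl d => ((z.1, z.2 + c) : Cyl d)) := by
    refine Isometry.of_dist_eq fun a b => ?_
    simp [Prod.dist_eq]
  unfold sdist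
  rw [← Metric.infDist_image hi (x := (x', t)) (t := subgraph d g),
    ← Metric.infDist_image hi (x := (x', t)) (t := (subgraph d g)ᶜ)]
  congr 2
  all_goals
    ext z
    simp only [mem_image, mem_compl_iff, mem_subG, not_le]
    constructor
    · intro h; exact ⟨(z.1, z.2 - c), by simp only; linarith, by simp⟩
    · rintro ⟨y, hy, rfl⟩; simpa using hy

/-- Lower bounds of the signed distance. -/
lemma sdist_lower (d : ℕ) (K : NNReal) (g : Torus d → ℝ) (hg : LipschitzWith K g) (x : Cyl d)
    (hx : g x.1 < x.2) : (x.2 - g x.1) ≤ (1 + K) * sdist d (subgraph d g) x := by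
  unfold sdist
  rw [Metric.infDist_zero_of_mem (show x ∈ (subgraph d g)ᶜ by simpa [mem_subG] using hx), sub_zero]
  have hK : (0:ℝ) < 1 + K := by positivity
  rw [← div_le_iff₀' hK, Metric.le_infDist (sub_ne d g)]
  intro z hz
  rw [div_le_iff₀' hK]
  have h1 : dist x.1 z.1 ≤ dist x z := by rw [Prod.dist_eq]; exact le_max_left _ _
  have h2 : |x.2 - z.2| ≤ dist x z := by
    rw [Prod.dist_eq, ← Real.dist_eq]; exact le_max_right _ _
  have h3 := (abs_le.1 h2).2
  have h4 := lip_le d K g hg z.1 x.1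
  have h5 := mul_le_mul_of_nonneg_left h1 K.2
  rw [dist_comm] at h4
  rw [mem_subG] at hz
  change (K:ℝ) * _ ≤ K * _ at h5
  linarith

lemma sdist_upper (d : ℕ) (K : NNReal) (g : Torus d → ℝ) (hg : LipschitzWith K g) (x : Cyl d)
    (hx : x.2 ≤ g x.1) : (g x.1 - x.2) ≤ (1 + K) * -sdist d (subgraph d g) x := by
  unfold sdist
  rw [Metric.infDist_zero_of_mem (show x ∈ (subgraph d g) from hx), zero_sub, neg_neg]
  have hK : (0:ℝ) < 1 + K := by positivity
  rw [← div_le_iff₀' hK, Metric.le_infDist (sub_cne d g)]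
  intro z hz
  rw [div_le_iff₀' hK]
  have h1 : dist x.1 z.1 ≤ dist x z := by rw [Prod.dist_eq]; exact le_max_left _ _
  have h2 : |x.2 - z.2| ≤ dist x z := by
    rw [Prod.dist_eq, ← Real.dist_eq]; exact le_max_right _ _
  have h3 := (abs_le.1 h2).1
  have h4 := lip_le d K g hg x.1 z.1
  have h5 := mul_le_mul_of_nonneg_left h1 K.2
  rw [mem_compl_iff, mem_subG, not_le] at hz
  change (K:ℝ) * _ ≤ K * _ at h5
  linarith

/-- The region between two graphs. -/
def btwG (d : ℕ) (f g : Torus d → ℝ) : Set (Cyl d) := {x | f x.1 < x.2 ∧ x.2 ≤ g x.1}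

lemma btw_meas (d : ℕ) (f g : Torus d → ℝ) (hf : Continuous f) (hg : Continuous g) :
    MeasurableSet (btwG d f g) :=
  ((isOpen_lt (hf.comp continuous_fst) continuous_snd).measurableSet).inter
    (isClosed_le continuous_snd (hg.comp continuous_fst)).measurableSet

lemma slab_meas (d : ℕ) (R : ℝ) : MeasurableSet (SlabR d R) :=
  ((isOpen_lt continuous_const continuous_snd).measurableSet).inter
    (isOpen_lt continuous_snd continuous_const).measurableSet

lemma int_slab (d : ℕ) (R : ℝ) (f : Cyl d → ℝ) (hf : Continuous f) :
    IntegrableOn f (SlabR d R) volume := by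
  have hc : IsCompact ((univ : Set (Torus d)) ×ˢ (Icc (-R) R)) := isCompact_univ.prod isCompact_Icc
  refine (hf.continuousOn.integrableOn_compact hc).mono_set ?_
  rintro x ⟨h1, h2⟩
  exact ⟨mem_univ _, h1.le, h2.le⟩

lemma btw_slab (d : ℕ) (R : ℝ) (f g : Torus d → ℝ) (h1 : ∀ x, -R ≤ f x) (h2 : ∀ x, g x < R) :
    btwG d f g ⊆ SlabR d R := fun x hx => ⟨(h1 _).trans_lt hx.1, hx.2.trans_lt (h2 _)⟩

lemma MR_iff (d : ℕ) (R : ℝ) (g : Torus d → ℝ) (hg : Continuous g) :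
    subgraph d g ∈ MR d R ↔ (∀ x, -R ≤ g x) ∧ ∀ x, g x < R := by
  constructor
  · rintro ⟨-, h1, h2⟩
    constructor
    · intro x
      refine le_of_forall_lt fun c hc => ?_
      obtain ⟨e, he1, he2⟩ := exists_between hc
      have : (x, e) ∈ subgraph d g := h1 (by simpa using he2)
      exact he1.trans_le this
    · intro x
      have : (x, g x) ∈ {x : Cyl d | x.2 < R} := h2 (by simp [mem_subG])
      exact this
  · rintro ⟨h1, h2⟩
    refine ⟨(sub_closed d g hg).measurableSet, ?_, ?_⟩
    · intro x hx
      exact (le_of_lt hx).trans (h1 _)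
    · intro x hx
      exact lt_of_le_of_lt hx (h2 _)

lemma int_diff (d : ℕ) (R : ℝ) (s : Cyl d → ℝ) (hs : Continuous s) (f g : Torus d → ℝ)
    (hf : Continuous f) (hfg : ∀ x, f x ≤ g x) (h1 : ∀ x, -R ≤ f x)
    (h2 : ∀ x, g x < R) :
    ∫ x in subgraph d g ∩ SlabR d R, s x =
      (∫ x in subgraph d f ∩ SlabR d R, s x) + ∫ x in btwG d f g, s x := by
  have : btwG d f g = (subgraph d g ∩ SlabR d R) \ (subgraph d f ∩ SlabR d R) := by
    ext x
    constructor
    · intro hx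
      exact ⟨⟨hx.2, btw_slab d R f g h1 h2 hx⟩, fun h => absurd hx.1 (not_lt.2 h.1)⟩
    · rintro ⟨⟨h1, h2⟩, h3⟩
      exact ⟨not_le.1 fun h => h3 ⟨h, h2⟩, h1⟩
  rw [this, setIntegral_sdiff ((sub_closed d f hf).measurableSet.inter (slab_meas d R))
    ((int_slab d R s hs).mono_set inter_subset_right)]
  · ring
  · exact inter_subset_inter_left _ fun x hx => le_trans hx (hfg _)

lemma min_real (d : ℕ) (P : GenPerimeter d) (L R h : ℝ) (hL : 0 < L) (E : Set (Cyl d))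
    (a f : Torus d → ℝ) (ha : LipschitzWith L.toNNReal a) (hf : LipschitzWith L.toNNReal f)
    (hm : IsMinimizer d P R h E (subgraph d a)) (hfR : subgraph d f ∈ MR d R) :
    (P.P (subgraph d a)).toReal + (1/h) * ∫ x in subgraph d a ∩ SlabR d R, sdist d E x ≤
    (P.P (subgraph d f)).toReal + (1/h) * ∫ x in subgraph d f ∩ SlabR d R, sdist d E x := by
  have := hm.2 _ hfR
  unfold Ftilde at this
  rw [← EReal.coe_ennreal_toReal (P.lip_finite L hL _ ⟨a, ha, rfl⟩).ne,
    ← EReal.coe_ennreal_toReal (P.lip_finite L hL _ ⟨f, hf, rfl⟩).ne,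
    ← EReal.coe_add, ← EReal.coe_add, EReal.coe_le_coe_iff] at this
  exact this

lemma P_shift (d : ℕ) (P : GenPerimeter d) (g : Torus d → ℝ) (c : ℝ) :
    P.P (subgraph d fun y => g y + c) = P.P (subgraph d g) := by
  rw [← P.transl_inv (subgraph d g) (0, c)]
  congr 1
  ext z
  simp only [mem_image, mem_subG, translCyl]
  constructor
  · intro h; exact ⟨(z.1, z.2 - c), by simp only; linarith, by simp⟩
  · rintro ⟨y, hy, rfl⟩; simpa using hy

lemma lip_shift (d : ℕ) (K : NNReal) (g : Torus d → ℝ) (c : ℝ) (hg : LipschitzWith K g) :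
    LipschitzWith K (fun y => g y + c) :=
  LipschitzWith.of_dist_le_mul fun x y => by simpa using hg.dist_le_mul x y

lemma int_shift (d : ℕ) (s : Cyl d → ℝ) (f g : Torus d → ℝ) (c : ℝ) :
    ∫ x in btwG d f g, s x = ∫ x in btwG d (fun y => f y + c) (fun y => g y + c),
      s (x.1, x.2 - c) := by
  have := vol_inv d
  have hp := measurePreserving_add_right (volume : Measure (Cyl d)) ((0, -c) : Cyl d)
  have := hp.setIntegral_preimage_emb (MeasurableEquiv.addRight ((0, -c) : Cyl d)).measurableEmbedding
    s (btwG d f g)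
  rw [← this]
  have h1 : (fun x : Cyl d => x + ((0, -c) : Cyl d)) ⁻¹' (btwG d f g) =
    btwG d (fun y => f y + c) (fun y => g y + c) := by
    ext x
    simp [btwG, lt_sub_iff_add_lt, ← sub_eq_add_neg]
  rw [h1]
  congr 1
  ext x
  congr 1
  ext <;> simp [sub_eq_add_neg]

/-- One-step comparison. -/
lemma compare_step (d : ℕ) (P : GenPerimeter d) (L R h : ℝ) (hL : 0 < L) (hh : 0 < h)
    (g g' a b : Torus d → ℝ)
    (hg' : LipschitzWith L.toNNReal g')
    (ha : LipschitzWith L.toNNReal a) (hb : LipschitzWith L.toNNReal b)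
    (hma : IsMinimizer d P R h (subgraph d g) (subgraph d a))
    (hmb : IsMinimizer d P R h (subgraph d g') (subgraph d b))
    (ε' : ℝ) (hε' : 0 ≤ ε') (hgg : ∀ x, g x ≤ g' x + ε') : ∀ x, a x ≤ b x + ε' := by
  intro x0
  refine le_of_forall_pos_le_add fun δ hδ => ?_
  by_contra hcon
  push Not at hcon
  set ε := ε' + δ with hε
  obtain ⟨ha1, ha2⟩ := (MR_iff d R a ha.continuous).1 hma.1
  obtain ⟨hb1, hb2⟩ := (MR_iff d R b hb.continuous).1 hmb.1
  set m : Torus d → ℝ := fun x => min (a x) (b x + ε) with hm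
  set M : Torus d → ℝ := fun x => max (a x + -ε) (b x) with hM
  have hmL : LipschitzWith L.toNNReal m := by
    simpa using ha.min (lip_shift d _ b ε hb)
  have hML : LipschitzWith L.toNNReal M := by
    simpa using (lip_shift d _ a (-ε) ha).max hb
  have hm1 : ∀ x, -R ≤ m x := fun x => le_min (ha1 x) (by linarith [hb1 x])
  have hM2 : ∀ x, M x < R := fun x => max_lt (by linarith [ha2 x]) (hb2 x)
  have hmR : subgraph d m ∈ MR d R := (MR_iff d R m hmL.continuous).2
    ⟨hm1, fun x => (min_le_left _ _).trans_lt (ha2 x)⟩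
  have hMR : subgraph d M ∈ MR d R := (MR_iff d R M hML.continuous).2
    ⟨fun x => (hb1 x).trans (le_max_right _ _), hM2⟩
  have e1 := min_real d P L R h hL _ a m ha hmL hma hmR
  have e2 := min_real d P L R h hL _ b M hb hML hmb hMR
  rw [int_diff d R _ (sdist_cont d (subgraph d g)) m a hmL.continuous
    (fun x => min_le_left _ _) hm1 ha2] at e1
  rw [int_diff d R _ (sdist_cont d (subgraph d g')) b M hb.continuous
    (fun x => le_max_right _ _) hb1 hM2, int_shift d _ b M ε] at e2
  have hD : btwG d (fun y => b y + ε) (fun y => M y + ε) = btwG d m a := by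
    ext x
    simp only [btwG, hm, hM, mem_ofPred_eq, min_lt_iff]
    constructor
    · rintro ⟨h1, h2⟩
      rcases max_choice (a x.1 + -ε) (b x.1) with h | h <;> rw [h] at h2
      · exact ⟨Or.inr h1, by linarith⟩
      · linarith
    · rintro ⟨h1 | h1, h2⟩
      · linarith
      · exact ⟨h1, by linarith [le_max_left (a x.1 + -ε) (b x.1)]⟩
  rw [hD] at e2
  -- submodularity
  have hsub : (P.P (subgraph d M)).toReal + (P.P (subgraph d m)).toReal ≤
      (P.P (subgraph d a)).toReal + (P.P (subgraph d b)).toReal := by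
    have := P.submodular (subgraph d a) (subgraph d fun y => b y + ε)
    have h1 : subgraph d a ∪ (subgraph d fun y => b y + ε) = subgraph d fun y => M y + ε := by
      ext x
      simp only [mem_union, mem_subG, hM, ← max_add_add_right, le_max_iff]
      constructor <;> rintro (h | h) <;> first | (left; linarith) | (right; linarith)
    have h2 : subgraph d a ∩ (subgraph d fun y => b y + ε) = subgraph d m := by
      ext x
      simp only [mem_inter_iff, mem_subG, hm, le_min_iff]
    rw [h1, h2, P_shift, P_shift] at this
    have fa := (P.lip_finite L hL _ ⟨a, ha, rfl⟩).ne
    have fb := (P.lip_finite L hL _ ⟨b, hb, rfl⟩).ne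
    have fm := (P.lip_finite L hL _ ⟨m, hmL, rfl⟩).ne
    have fM := (P.lip_finite L hL _ ⟨M, hML, rfl⟩).ne
    rw [← ENNReal.toReal_add fM fm, ← ENNReal.toReal_add fa fb]
    exact ENNReal.toReal_mono (ENNReal.add_ne_top.2 ⟨fa, fb⟩) this
  have hle : ∫ x in btwG d m a, sdist d (subgraph d g) x ≤
      ∫ x in btwG d m a, sdist d (subgraph d g') (x.1, x.2 - ε) := by
    have : (1/h) * (∫ x in btwG d m a, sdist d (subgraph d g) x) ≤
      (1/h) * ∫ x in btwG d m a, sdist d (subgraph d g') (x.1, x.2 - ε) := by linarith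
    exact le_of_mul_le_mul_left this (by positivity)
  have hpt : ∀ x : Cyl d, sdist d (subgraph d g') (x.1, x.2 - ε) < sdist d (subgraph d g) x := by
    intro x
    have h1 := sdist_anti d g (fun y => g' y + ε') hgg x
    have h2 := sdist_shift d g' ε' x.1 (x.2 - ε')
    rw [sub_add_cancel] at h2
    have h3 := sdist_strict d _ g' hg' x.1 (x.2 - ε) δ hδ
    rw [show x.2 - ε + δ = x.2 - ε' by rw [hε]; ring, ← h2] at h3
    exact h3.trans_le h1
  have hc1 := sdist_cont d (subgraph d g)
  have hc2 : Continuous fun x : Cyl d => sdist d (subgraph d g') (x.1, x.2 - ε) :=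
    (sdist_cont d (subgraph d g')).comp (by fun_prop)
  have hsl := btw_slab d R m a hm1 ha2
  have i1 := (int_slab d R _ hc1).mono_set hsl
  have i2 := (int_slab d R _ hc2).mono_set hsl
  have hpos : 0 < ∫ x in btwG d m a,
      (sdist d (subgraph d g) x - sdist d (subgraph d g') (x.1, x.2 - ε)) := by
    rw [setIntegral_pos_iff_support_of_nonneg_ae
      (Eventually.of_forall fun x => (sub_pos.2 (hpt x)).le) (i1.sub i2)]
    have hU : IsOpen {x : Cyl d | m x.1 < x.2 ∧ x.2 < a x.1} :=
      (isOpen_lt (hmL.continuous.comp continuous_fst) continuous_snd).inter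
        (isOpen_lt continuous_snd (ha.continuous.comp continuous_fst))
    have hne : {x : Cyl d | m x.1 < x.2 ∧ x.2 < a x.1}.Nonempty := by
      have : m x0 < a x0 := min_lt_of_right_lt (by linarith)
      obtain ⟨e, h1, h2⟩ := exists_between this
      exact ⟨(x0, e), h1, h2⟩
    refine (hU.measure_pos volume hne).trans_le (measure_mono fun x hx => ?_)
    exact ⟨(sub_pos.2 (hpt x)).ne', hx.1, hx.2.le⟩
  rw [integral_sub i1 i2] at hpos
  linarith

/-- volume of a strip around a graph -/
lemma strip_vol (d : ℕ) (g : Torus d → ℝ) (hg : Continuous g) (ε : ℝ) :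
    volume {x : Cyl d | |x.2 - g x.1| ≤ ε} = ENNReal.ofReal (2 * ε) * volume (univ : Set (Torus d)) := by
  have hm : MeasurableSet {x : Cyl d | |x.2 - g x.1| ≤ ε} :=
    (isClosed_le (by fun_prop) continuous_const).measurableSet
  rw [Measure.volume_eq_prod, Measure.prod_apply hm]
  have : ∀ x : Torus d, volume (Prod.mk x ⁻¹' {x : Cyl d | |x.2 - g x.1| ≤ ε}) =
      ENNReal.ofReal (2 * ε) := by
    intro x
    have : Prod.mk x ⁻¹' {x : Cyl d | |x.2 - g x.1| ≤ ε} = Icc (g x - ε) (g x + ε) := by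
      ext t
      simp only [mem_preimage, mem_ofPred_eq, mem_Icc, abs_le]
      constructor <;> rintro ⟨h1, h2⟩ <;> constructor <;> linarith
    rw [this, Real.volume_Icc]
    congr 1; ring
  simp_rw [this]
  simp

lemma symm_btw (d : ℕ) (a g : Torus d → ℝ) :
    symmDiff (subgraph d a) (subgraph d g) = btwG d g a ∪ btwG d a g := by
  ext x
  simp only [mem_symmDiff, mem_subG, btwG, mem_union, mem_ofPred_eq, not_le]
  tauto

lemma symm_strip (d : ℕ) (a g : Torus d → ℝ) (ε : ℝ) (h : ∀ x, |a x - g x| ≤ ε) :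
    symmDiff (subgraph d a) (subgraph d g) ⊆ {x : Cyl d | |x.2 - g x.1| ≤ ε} := by
  rw [symm_btw]
  rintro x (⟨h1, h2⟩ | ⟨h1, h2⟩) <;> have := abs_le.1 (h x.1) <;>
    simp only [mem_ofPred_eq, abs_le] <;> constructor <;> linarith

lemma markov_slab (d : ℕ) (R : ℝ) (B : Set (Cyl d)) (hB : MeasurableSet B) (hBR : B ⊆ SlabR d R)
    (f : Cyl d → ℝ) (hf : Continuous f) (hpos : ∀ x ∈ B, 0 ≤ f x) (c : ℝ) (hc : 0 < c) :
    volume (B ∩ {x | c ≤ f x}) ≤ ENNReal.ofReal ((∫ x in B, f x) / c) := by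
  have hi : Integrable f (volume.restrict B) := (int_slab d R f hf).mono_set hBR
  have hm : MeasurableSet {x | c ≤ f x} := (isClosed_le continuous_const hf).measurableSet
  have h0 : 0 ≤ᵐ[volume.restrict B] f := by
    filter_upwards [ae_restrict_mem hB] with x hx using hpos x hx
  have h1 := mul_meas_ge_le_integral_of_nonneg h0 hi c
  have hfin : volume B ≠ ⊤ := by
    have hk : IsCompact ((univ : Set (Torus d)) ×ˢ (Icc (-R) R)) :=
      isCompact_univ.prod isCompact_Icc
    refine ((measure_mono fun x hx => ?_).trans_lt hk.measure_lt_top).ne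
    exact ⟨mem_univ _, (hBR hx).1.le, (hBR hx).2.le⟩
  have h2 : (volume.restrict B).real {x | c ≤ f x} = (volume (B ∩ {x | c ≤ f x})).toReal := by
    rw [Measure.real, Measure.restrict_apply hm, inter_comm]
  rw [h2, ← le_div_iff₀' hc] at h1
  rw [← ENNReal.ofReal_toReal (measure_ne_top_of_subset inter_subset_left hfin)]
  exact ENNReal.ofReal_le_ofReal h1

lemma one_step (d : ℕ) (P : GenPerimeter d) (L R h : ℝ) (hL : 0 < L) (hh : 0 < h)
    (g a : Torus d → ℝ) (hg : LipschitzWith L.toNNReal g) (ha : LipschitzWith L.toNNReal a)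
    (hgR : subgraph d g ∈ MR d R)
    (hma : IsMinimizer d P R h (subgraph d g) (subgraph d a)) :
    (P.P (subgraph d a)).toReal ≤ (P.P (subgraph d g)).toReal ∧
    volume (symmDiff (subgraph d a) (subgraph d g)) ≤
      ENNReal.ofReal (2 * √h) * volume (univ : Set (Torus d)) +
      ENNReal.ofReal ((1 + L.toNNReal) * (P.P (subgraph d g)).toReal * √h) := by
  obtain ⟨ha1, ha2⟩ := (MR_iff d R a ha.continuous).1 hma.1
  obtain ⟨hg1, hg2⟩ := (MR_iff d R g hg.continuous).1 hgR
  set m : Torus d → ℝ := fun x => min (a x) (g x) with hm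
  have hmL : LipschitzWith L.toNNReal m := by simpa using ha.min hg
  have hm1 : ∀ x, -R ≤ m x := fun x => le_min (ha1 x) (hg1 x)
  have e1 := min_real d P L R h hL _ a g ha hg hma hgR
  set s := sdist d (subgraph d g) with hs
  have hsc : Continuous s := sdist_cont d _
  rw [int_diff d R s hsc m a hmL.continuous (fun x => min_le_left _ _) hm1 ha2,
    int_diff d R s hsc m g hmL.continuous (fun x => min_le_right _ _) hm1 hg2] at e1
  have s1 : btwG d m a = btwG d g a := by
    ext x
    simp only [btwG, hm, mem_ofPred_eq, min_lt_iff]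
    constructor
    · rintro ⟨h1 | h1, h2⟩
      · linarith
      · exact ⟨h1, h2⟩
    · rintro ⟨h1, h2⟩; exact ⟨Or.inr h1, h2⟩
  have s2 : btwG d m g = btwG d a g := by
    ext x
    simp only [btwG, hm, mem_ofPred_eq, min_lt_iff]
    constructor
    · rintro ⟨h1 | h1, h2⟩
      · exact ⟨h1, h2⟩
      · linarith
    · rintro ⟨h1, h2⟩; exact ⟨Or.inl h1, h2⟩
  rw [s1, s2] at e1
  have hK : (0:ℝ) < 1 + L.toNNReal := by positivity
  have p1 : ∀ x ∈ btwG d g a, 0 ≤ s x := fun x hx => by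
    have h1 := sdist_lower d _ g hg x hx.1
    have h2 := hx.1
    exact (pos_of_mul_pos_right (lt_of_lt_of_le (sub_pos.2 h2) h1) hK.le).le
  have p2 : ∀ x ∈ btwG d a g, 0 ≤ - s x := fun x hx => by
    have h1 := sdist_upper d _ g hg x hx.2
    exact nonneg_of_mul_nonneg_right ((sub_nonneg.2 hx.2).trans h1) hK
  have b1 := btw_meas d g a hg.continuous ha.continuous
  have b2 := btw_meas d a g ha.continuous hg.continuous
  set I1 := ∫ x in btwG d g a, s x with hI1
  set I2 := ∫ x in btwG d a g, - s x with hI2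
  have hI2' : ∫ x in btwG d a g, s x = - I2 := by rw [hI2, integral_neg, neg_neg]
  have n1 : 0 ≤ I1 := setIntegral_nonneg b1 p1
  have n2 : 0 ≤ I2 := setIntegral_nonneg b2 p2
  rw [hI2'] at e1
  have e2 : (P.P (subgraph d a)).toReal + (1/h) * (I1 + I2) ≤ (P.P (subgraph d g)).toReal := by
    linarith
  have hPa : 0 ≤ (P.P (subgraph d a)).toReal := ENNReal.toReal_nonneg
  constructor
  · have : 0 ≤ (1/h) * (I1 + I2) := by positivity
    linarith
  have e3 : I1 + I2 ≤ h * (P.P (subgraph d g)).toReal := by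
    have : (1/h) * (I1 + I2) ≤ (P.P (subgraph d g)).toReal := by linarith
    rw [one_div, inv_mul_le_iff₀ hh] at this
    exact this
  have hη : 0 < √h := Real.sqrt_pos.2 hh
  set c := √h / (1 + L.toNNReal) with hc
  have hcp : 0 < c := by positivity
  have m1 := markov_slab d R _ b1 (btw_slab d R _ _ hg1 ha2) s hsc p1 c hcp
  have m2 := markov_slab d R _ b2 (btw_slab d R _ _ ha1 hg2) (fun x => - s x) hsc.neg p2 c hcp
  have hsub : symmDiff (subgraph d a) (subgraph d g) ⊆ {x : Cyl d | |x.2 - g x.1| ≤ √h} ∪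
      ((btwG d g a ∩ {x | c ≤ s x}) ∪ (btwG d a g ∩ {x | c ≤ - s x})) := by
    rw [symm_btw]
    intro x hx
    by_cases hxs : |x.2 - g x.1| ≤ √h
    · exact Or.inl hxs
    right
    push Not at hxs
    rcases hx with hx | hx
    · left
      refine ⟨hx, ?_⟩
      have h1 := sdist_lower d _ g hg x hx.1
      rw [abs_of_pos (sub_pos.2 hx.1)] at hxs
      rw [mem_ofPred_eq, hc, div_le_iff₀' hK]
      linarith
    · right
      refine ⟨hx, ?_⟩
      have h1 := sdist_upper d _ g hg x hx.2
      rw [abs_of_nonpos (sub_nonpos.2 hx.2)] at hxs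
      rw [mem_ofPred_eq, hc, div_le_iff₀' hK]
      linarith
  refine (measure_mono hsub).trans ((measure_union_le _ _).trans ?_)
  rw [strip_vol d g hg.continuous]
  gcongr
  refine (measure_union_le _ _).trans ((add_le_add m1 m2).trans ?_)
  rw [← ENNReal.ofReal_add (by positivity) (by positivity)]
  apply ENNReal.ofReal_le_ofReal
  rw [← add_div, div_le_iff₀ hcp]
  refine e3.trans (le_of_eq ?_)
  rw [hc]
  field_simp
  rw [Real.sq_sqrt hh.le]
  ring

lemma ball_vol (d : ℕ) (p : Cyl d) (ρ : ℝ) :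
    volume (Metric.ball p ρ) = volume (Metric.ball (0 : Cyl d) ρ) := by
  have := vol_inv d
  rw [← measure_preimage_add volume p (Metric.ball p ρ)]
  congr 1
  ext x
  simp only [mem_preimage, mem_ball_iff_norm, add_sub_cancel_left, sub_zero]

lemma ball_btw (d : ℕ) (K : NNReal) (f g : Torus d → ℝ) (hf : LipschitzWith K f)
    (hg : LipschitzWith K g) (ε : ℝ) (x0 : Torus d) (h : g x0 + ε < f x0) :
    Metric.ball ((x0, g x0 + ε / 2) : Cyl d) (ε / (2 * (1 + K))) ⊆ btwG d g f := by
  intro y hy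
  set ρ := ε / (2 * (1 + (K:ℝ))) with hρ
  have hK : (0:ℝ) < 1 + K := by positivity
  have hρK : ρ * (1 + K) = ε / 2 := by rw [hρ]; field_simp
  rw [Metric.mem_ball, Prod.dist_eq, max_lt_iff, Real.dist_eq, abs_lt] at hy
  obtain ⟨h1, h2, h3⟩ := hy
  have h4 := lip_le d K g hg y.1 x0
  have h5 := lip_le d K f hf x0 y.1
  rw [dist_comm] at h5
  have h6 := mul_le_mul_of_nonneg_left h1.le K.2
  change (K:ℝ) * _ ≤ K * _ at h6
  simp only at h1 h2 h3
  constructor <;> nlinarith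

lemma unif_close (d : ℕ) (K : NNReal) (ε : ℝ) (hε : 0 < ε) :
    ∃ c : ℝ≥0∞, 0 < c ∧ ∀ f g : Torus d → ℝ, LipschitzWith K f → LipschitzWith K g →
      volume (symmDiff (subgraph d f) (subgraph d g)) < c → ∀ x, |f x - g x| ≤ ε := by
  have hK : (0:ℝ) < 1 + K := by positivity
  refine ⟨volume (Metric.ball (0 : Cyl d) (ε / (2 * (1 + K)))),
    Metric.measure_ball_pos _ _ (by positivity), fun f g hf hg hv x => ?_⟩
  rw [symm_btw] at hv
  by_contra hcon
  push Not at hcon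
  rcases lt_abs.1 hcon with h | h
  · have := measure_mono (μ := volume) ((ball_btw d K f g hf hg ε x (by linarith)).trans
      (subset_union_left (t := btwG d f g)))
    rw [ball_vol] at this
    exact absurd hv (not_lt.2 this)
  · have := measure_mono (μ := volume) ((ball_btw d K g f hg hf ε x (by linarith)).trans
      (subset_union_right (s := btwG d g f)))
    rw [ball_vol] at this
    exact absurd hv (not_lt.2 this)

lemma strip_small (d : ℕ) (δ : ℝ≥0∞) (hδ : 0 < δ) :
    ∃ ε : ℝ, 0 < ε ∧ ENNReal.ofReal (2 * ε) * volume (univ : Set (Torus d)) ≤ δ := by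
  have h1 : Tendsto (fun ε : ℝ => ENNReal.ofReal (2 * ε) * volume (univ : Set (Torus d)))
      (nhds 0) (nhds 0) := by
    have : Tendsto (fun ε : ℝ => ENNReal.ofReal (2 * ε)) (nhds 0) (nhds 0) := by
      have : Tendsto (fun ε : ℝ => 2 * ε) (nhds 0) (nhds 0) := by
        have := (by fun_prop : Continuous fun ε : ℝ => 2 * ε).tendsto 0
        rwa [mul_zero] at this
      simpa using ENNReal.tendsto_ofReal this
    simpa using ENNReal.Tendsto.mul_const this (Or.inr (measure_ne_top volume univ))
  have h2 := (ENNReal.tendsto_nhds_zero.1 h1) δ hδ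
  have h3 : ∀ᶠ ε : ℝ in nhdsWithin 0 (Ioi 0), 0 < ε ∧
      ENNReal.ofReal (2 * ε) * volume (univ : Set (Torus d)) ≤ δ :=
    (eventually_mem_nhdsWithin).and (h2.filter_mono nhdsWithin_le_nhds)
  exact h3.exists

lemma contraction (d : ℕ) (P : GenPerimeter d) (L R h : ℝ) (hL : 0 < L) (hh : 0 < h)
    (e f : ℕ → Torus d → ℝ) (he : ∀ j, LipschitzWith L.toNNReal (e j))
    (hf : ∀ j, LipschitzWith L.toNNReal (f j))
    (me : ∀ j, IsMinimizer d P R h (subgraph d (e j)) (subgraph d (e (j+1))))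
    (mf : ∀ j, IsMinimizer d P R h (subgraph d (f j)) (subgraph d (f (j+1))))
    (m : ℕ) (ε : ℝ) (hε : 0 ≤ ε) (h0 : ∀ x, |e m x - f 0 x| ≤ ε) (n : ℕ) :
    ∀ x, |e (m + n) x - f n x| ≤ ε := by
  induction n with
  | zero => exact h0
  | succ n ih =>
    intro x
    have h1 := compare_step d P L R h hL hh _ _ _ _ (hf n) (he (m+n+1)) (hf (n+1)) (me (m+n)) (mf n)
      ε hε (fun x => by linarith [(abs_le.1 (ih x)).2]) x
    have h2 := compare_step d P L R h hL hh _ _ _ _ (he (m+n)) (hf (n+1)) (he (m+n+1)) (mf n)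
      (me (m+n)) ε hε (fun x => by linarith [(abs_le.1 (ih x)).1]) x
    rw [← add_assoc, abs_le]
    constructor <;> linarith

lemma flow_fun (d : ℕ) (P : GenPerimeter d) (L R h : ℝ) (E₀ : Set (Cyl d))
    (Eh : ℕ → Set (Cyl d)) (h0 : E₀ ∈ LipClass d L) (hE : IsApproxFlow d P L R h E₀ Eh) :
    ∃ e : ℕ → Torus d → ℝ, (∀ j, LipschitzWith L.toNNReal (e j)) ∧
      (∀ j, Eh j = subgraph d (e j)) ∧
      ∀ j, IsMinimizer d P R h (subgraph d (e j)) (subgraph d (e (j+1))) := by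
  have : ∀ j, Eh j ∈ LipClass d L := by
    intro j
    cases j with
    | zero => rw [hE.1]; exact h0
    | succ j => exact (hE.2 j).1
  choose e he1 he2 using this
  refine ⟨e, he1, he2, fun j => ?_⟩
  rw [← he2, ← he2]
  exact (hE.2 j).2

/-- The semigroup property of the flat flow: the approximate flat solutions with initial
datum `E0 t̄` converge at time `Δt` to `E0 (t̄ + Δt)`. -/
theorem flatFlow_semigroup (d : ℕ) (hd : 2 ≤ d) (P : GenPerimeter d) (L R : ℝ)
    (hL : 0 < L) (hR : 0 < R) (E₀ : Set (Cyl d)) (hE₀ : E₀ ∈ LipClass d L ∩ MR d R)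
    (hk : ℕ → ℝ) (hkpos : ∀ k, 0 < hk k) (hkto : Tendsto hk atTop (nhds 0))
    (Eflow : ℕ → ℕ → Set (Cyl d)) (E0 : ℝ → Set (Cyl d))
    (hFF : IsFlatFlow d P L R hk E₀ Eflow E0)
    (tb Δt : ℝ) (htb : 0 ≤ tb) (hΔt : 0 ≤ Δt)
    (F : ℕ → ℕ → Set (Cyl d)) (hF : ∀ k, IsApproxFlow d P L R (hk k) (E0 tb) (F k)) :
    Tendsto (fun k => volume (symmDiff (F k ⌊Δt / hk k⌋₊) (E0 (tb + Δt)))) atTop (nhds 0) := by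
  obtain ⟨h00, hLip, hflow, hconv⟩ := hFF
  choose e he1 he2 he3 using fun k => flow_fun d P L R (hk k) E₀ (Eflow k) hE₀.1 (hflow k)
  choose f hf1 hf2 hf3 using fun k => flow_fun d P L R (hk k) (E0 tb) (F k) (hLip tb htb) (hF k)
  obtain ⟨g, hg1, hg2⟩ := hLip tb htb
  -- part 1: contraction
  have T1 : Tendsto (fun k => volume (symmDiff (F k ⌊Δt / hk k⌋₊)
      (Eflow k (⌊tb / hk k⌋₊ + ⌊Δt / hk k⌋₊)))) atTop (nhds 0) := by
    rw [ENNReal.tendsto_nhds_zero]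
    intro δ hδ
    obtain ⟨ε, hε, hεδ⟩ := strip_small d δ hδ
    obtain ⟨c, hc, hcl⟩ := unif_close d L.toNNReal ε hε
    filter_upwards [(hconv tb htb).eventually (gt_mem_nhds hc)] with k hkc
    rw [← (hF k).1, he2, hf2] at hkc
    have h1 := hcl _ _ (he1 k _) (hf1 k 0) hkc
    have h2 := contraction d P L R (hk k) hL (hkpos k) (e k) (f k) (he1 k) (hf1 k) (he3 k) (hf3 k)
      _ ε hε.le h1 ⌊Δt / hk k⌋₊
    rw [he2, hf2]
    refine (measure_mono (symm_strip d _ _ ε fun x => ?_)).trans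
      ((strip_vol d _ (he1 k _).continuous ε).le.trans hεδ)
    rw [abs_sub_comm]
    exact h2 x
  -- part 2: one step
  have hMR : ∀ k j, subgraph d (e k j) ∈ MR d R := by
    intro k j
    cases j with
    | zero => rw [← he2, (hflow k).1]; exact hE₀.2
    | succ j => exact (he3 k j).1
  have hP : ∀ k j, (P.P (subgraph d (e k j))).toReal ≤ (P.P E₀).toReal := by
    intro k j
    induction j with
    | zero => rw [← he2, (hflow k).1]
    | succ j ih =>
      exact (one_step d P L R (hk k) hL (hkpos k) _ _ (he1 k j) (he1 k (j+1)) (hMR k j)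
        (he3 k j)).1.trans ih
  have T2 : Tendsto (fun k => volume (symmDiff (Eflow k (⌊tb / hk k⌋₊ + ⌊Δt / hk k⌋₊))
      (Eflow k ⌊(tb + Δt) / hk k⌋₊))) atTop (nhds 0) := by
    have hlim : Tendsto (fun k => ENNReal.ofReal (2 * √(hk k)) * volume (univ : Set (Torus d)) +
        ENNReal.ofReal ((1 + L.toNNReal) * (P.P E₀).toReal * √(hk k))) atTop (nhds 0) := by
      have hs : Tendsto (fun k => √(hk k)) atTop (nhds 0) := by
        have := (Real.continuous_sqrt.tendsto 0).comp hkto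
        rwa [Real.sqrt_zero] at this
      have hc : ∀ C : ℝ, Tendsto (fun k => ENNReal.ofReal (C * √(hk k))) atTop (nhds 0) := by
        intro C
        have := ENNReal.tendsto_ofReal (hs.const_mul C)
        simpa using this
      have h1 := ENNReal.Tendsto.mul_const (hc 2)
        (Or.inr (measure_ne_top (volume : Measure (Torus d)) univ))
      simpa using h1.add (hc ((1 + L.toNNReal) * (P.P E₀).toReal))
    refine tendsto_of_tendsto_of_tendsto_of_le_of_le tendsto_const_nhds hlim
      (fun k => zero_le) (fun k => ?_)
    have hp := hkpos k
    have a1 : 0 ≤ tb / hk k := by positivity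
    have a2 : 0 ≤ Δt / hk k := by positivity
    have hN : ⌊(tb + Δt) / hk k⌋₊ = ⌊tb / hk k⌋₊ + ⌊Δt / hk k⌋₊ ∨
        ⌊(tb + Δt) / hk k⌋₊ = ⌊tb / hk k⌋₊ + ⌊Δt / hk k⌋₊ + 1 := by
      rw [add_div]
      have l1 : ⌊tb / hk k⌋₊ + ⌊Δt / hk k⌋₊ ≤ ⌊tb / hk k + Δt / hk k⌋₊ := by
        apply Nat.le_floor
        push_cast
        exact add_le_add (Nat.floor_le a1) (Nat.floor_le a2)
      have l2 : ⌊tb / hk k + Δt / hk k⌋₊ < ⌊tb / hk k⌋₊ + ⌊Δt / hk k⌋₊ + 2 := by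
        rw [Nat.floor_lt (by positivity)]
        push_cast
        linarith [Nat.lt_floor_add_one (tb / hk k), Nat.lt_floor_add_one (Δt / hk k)]
      omega
    rcases hN with hN | hN <;> rw [hN]
    · simp
    · rw [he2, he2, symmDiff_comm]
      refine (one_step d P L R (hk k) hL (hkpos k) _ _ (he1 k _) (he1 k _) (hMR k _)
        (he3 k _)).2.trans ?_
      refine add_le_add le_rfl (ENNReal.ofReal_le_ofReal ?_)
      exact mul_le_mul_of_nonneg_right (mul_le_mul_of_nonneg_left (hP k _) (by positivity))
        (Real.sqrt_nonneg _)
  have T3 := hconv (tb + Δt) (by positivity)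
  have hsum := (T1.add T2).add T3
  simp only [add_zero] at hsum
  refine tendsto_of_tendsto_of_tendsto_of_le_of_le tendsto_const_nhds hsum
    (fun k => zero_le) (fun k => ?_)
  exact (measure_symmDiff_le _ (Eflow k ⌊(tb + Δt) / hk k⌋₊) _).trans
    (add_le_add (measure_symmDiff_le _ _ _) le_rfl)
end
end

section
/- Let d ≥ 2 and 0 < α < d−1. Then for every L > 0 and every periodic L-Lipschitz subgraph E ∈ 𝔠_L, the α-Riesz perimeter is finite: 𝒫^α(E) < +∞ (in particular, the defining limit lim_{R→+∞} 𝒫^α_{−R,ρ_E}(E) exists and is finite). -/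
open MeasureTheory Filter Set
open scoped ENNReal

noncomputable section

/-- The periodic norm `‖ξ‖_♯ = (|ξ_d|² + min_{z'∈ℤ^{d-1}} |ξ̃' + z'|²)^{1/2}`. -/
def pnorm (d : ℕ) (ξ : Cyl d) : ℝ := Real.sqrt (ξ.2 ^ 2 + ∑ i, ‖ξ.1 i‖ ^ 2)

/-- The Riesz interaction `𝒥^α(E,F) = ∫_E ∫_F ‖x-y‖_♯^{-(d-α)} dy dx`. -/
def Jalpha (d : ℕ) (α : ℝ) (E F : Set (Cyl d)) : ℝ≥0∞ :=
  ∫⁻ x in E, ∫⁻ y in F, (ENNReal.ofReal (pnorm d (x - y))) ^ (-((d : ℝ) - α)) ∂volume ∂volume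

/-- The slab `𝕊^d_{R₁,R₂} = 𝕋^{d-1} × (R₁, R₂)`. -/
def slab2 (d : ℕ) (R₁ R₂ : ℝ) : Set (Cyl d) := {x | R₁ < x.2 ∧ x.2 < R₂}

/-- `𝒫^α_{R₁,R₂}(E) = 𝒥^α(𝕊,𝕊) - 𝒥^α(E∩𝕊, E∩𝕊)`. -/
def PalphaSlab (d : ℕ) (α R₁ R₂ : ℝ) (E : Set (Cyl d)) : ℝ≥0∞ :=
  Jalpha d α (slab2 d R₁ R₂) (slab2 d R₁ R₂)
    - Jalpha d α (E ∩ slab2 d R₁ R₂) (E ∩ slab2 d R₁ R₂)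

/-- `ρ_E < +∞`, i.e. `E` is contained in some halfspace `𝕋^{d-1} × (-∞, ρ)`. -/
def BddTop (d : ℕ) (E : Set (Cyl d)) : Prop := ∃ ρ : ℝ, E ⊆ {x : Cyl d | x.2 < ρ}

/-- `ρ_E = inf {ρ : E ⊆ 𝕋^{d-1} × (-∞, ρ)}`. -/
def rhoSup (d : ℕ) (E : Set (Cyl d)) : ℝ := sInf {ρ : ℝ | E ⊆ {x : Cyl d | x.2 < ρ}}

open Classical in
/-- The `α`-Riesz perimeter `𝒫^α` (the limits in `R` exist by monotonicity, so they
coincide with the `limsup`). -/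
def Palpha (d : ℕ) (α : ℝ) (E : Set (Cyl d)) : ℝ≥0∞ :=
  if E = ∅ then 0
  else if BddTop d E then limsup (fun R : ℝ => PalphaSlab d α (-R) (rhoSup d E) E) atTop
  else limsup (fun R : ℝ => PalphaSlab d α (-R) R E) atTop

lemma aux_abs (f : ℝ → ℝ≥0∞) (h : ∫⁻ t in Ioi (0:ℝ), f t < ⊤) : ∫⁻ t, f |t| < ⊤ := by
  have h1 : ∫⁻ t in Ioi (0:ℝ), f |t| < ⊤ := by
    rwa [setLIntegral_congr_fun measurableSet_Ioi (g := f)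
      (fun t ht => by simp only [abs_of_pos (show (0:ℝ) < t from ht)])]
  have h2 : ∫⁻ t in Iio (0:ℝ), f |t| < ⊤ := by
    have := (Measure.measurePreserving_neg (volume : Measure ℝ)).setLIntegral_comp_preimage_emb
      (Homeomorph.neg ℝ).measurableEmbedding (fun t => f |t|) (Ioi 0)
    simp only [abs_neg] at this
    have e : (Neg.neg ⁻¹' Ioi (0:ℝ)) = Iio 0 := by ext; simp
    rw [e] at this
    rwa [this]
  have h3 : ∫⁻ t in Iic (0:ℝ), f |t| < ⊤ := by
    rwa [setLIntegral_congr (Iio_ae_eq_Iic (μ := volume) (a := (0:ℝ))).symm]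
  rw [← lintegral_add_compl _ (measurableSet_Ioi (a := (0:ℝ))), compl_Ioi]
  exact ENNReal.add_lt_top.2 ⟨h1, h3⟩

lemma aux_near (b : ℝ) (hb : b < 1) :
    ∫⁻ t : ℝ, (if |t| < 1 then ENNReal.ofReal |t| ^ (-b) else 0) < ⊤ := by
  apply aux_abs (fun t => if t < 1 then ENNReal.ofReal t ^ (-b) else 0)
  have h := (intervalIntegral.integrableOn_Ioo_rpow_iff (s := -b) (t := 1) one_pos).2 (by linarith)
  have h2 := h.2
  rw [hasFiniteIntegral_iff_ofReal] at h2
  · refine lt_of_eq_of_lt ?_ h2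
    rw [← lintegral_indicator measurableSet_Ioi, ← lintegral_indicator measurableSet_Ioo]
    congr 1
    ext t
    by_cases h0 : 0 < t
    · by_cases h1 : t < 1
      · simp [indicator, h0, h1, ENNReal.ofReal_rpow_of_pos]
      · simp [indicator, h0, h1]
    · simp [indicator, h0]
  · filter_upwards [ae_restrict_mem measurableSet_Ioo] with t ht
    exact Real.rpow_nonneg ht.1.le _

lemma aux_far (s : ℝ) (hs : 1 < s) :
    ∫⁻ t : ℝ, (if |t| < 1 then 0 else ENNReal.ofReal |t| ^ (-s)) < ⊤ := by
  apply aux_abs (fun t => if t < 1 then 0 else ENNReal.ofReal t ^ (-s))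
  have h := integrableOn_Ioi_rpow_of_lt (a := -s) (c := 1) (by linarith) one_pos
  have h2 := h.2
  rw [hasFiniteIntegral_iff_ofReal] at h2
  · refine lt_of_eq_of_lt ?_ h2
    rw [← setLIntegral_congr (Ioi_ae_eq_Ici (μ := volume) (a := (1:ℝ))).symm,
      ← lintegral_indicator measurableSet_Ioi, ← lintegral_indicator measurableSet_Ici]
    congr 1
    ext t
    by_cases h1 : t < 1
    · simp [indicator, h1]
    · have h0 : 0 < t := by linarith
      simp [indicator, h0, h1, ENNReal.ofReal_rpow_of_pos, not_lt.1 h1]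
  · filter_upwards [ae_restrict_mem measurableSet_Ioi] with t ht
    exact Real.rpow_nonneg (by have : (1:ℝ) < t := ht; linarith) _

lemma aux_circ (b : ℝ) (hb : b < 1) :
    ∫⁻ x : AddCircle (1:ℝ), ENNReal.ofReal ‖x‖ ^ (-b) < ⊤ := by
  rw [← AddCircle.lintegral_preimage 1 (-(1/2))]
  refine lt_of_le_of_lt ?_ (aux_near b hb)
  rw [← lintegral_indicator measurableSet_Ioc]
  apply lintegral_mono
  intro t
  by_cases ht : t ∈ Ioc (-(1/2):ℝ) (-(1/2)+1)
  · have h1 : |t| ≤ 1/2 := by rw [abs_le]; constructor <;> linarith [ht.1, ht.2]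
    have h2 : ‖(t : AddCircle (1:ℝ))‖ = |t| :=
      (AddCircle.norm_coe_eq_abs_iff 1 one_ne_zero).2 (by simpa using h1)
    have h3 : |t| < 1 := by linarith
    simp only [indicator_of_mem ht, h2, if_pos h3]
    exact le_rfl
  · simp only [indicator_of_notMem ht]
    exact zero_le

instance aux_prob : IsProbabilityMeasure (volume : Measure (AddCircle (1:ℝ))) :=
  ⟨by simp⟩

lemma aux_torus (n : ℕ) (b : ℝ) (hb : b < 1) :
    ∫⁻ x : Fin n → AddCircle (1:ℝ), ∏ i, ENNReal.ofReal ‖x i‖ ^ (-b) < ⊤ := by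
  have hm : Measurable (fun x : AddCircle (1:ℝ) => ENNReal.ofReal ‖x‖ ^ (-b)) := by fun_prop
  have hi := ProbabilityTheory.iIndepFun_pi (ι := Fin n)
    (μ := fun _ => (volume : Measure (AddCircle (1:ℝ))))
    (X := fun _ x => ENNReal.ofReal ‖x‖ ^ (-b)) (fun _ => hm.aemeasurable)
  have := ProbabilityTheory.lintegral_prod_eq_prod_lintegral_of_indepFun Finset.univ _ hi
    (fun i => hm.comp (measurable_pi_apply i))
  rw [volume_pi, this]
  refine ENNReal.prod_lt_top fun i _ => ?_
  have := (measurePreserving_eval (fun _ : Fin n => (volume : Measure (AddCircle (1:ℝ)))) i).lintegral_comp hm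
  simp only [Function.eval] at this
  rw [this]
  exact aux_circ b hb

/-- The kernel. -/
def rker (d : ℕ) (s : ℝ) (ξ : Cyl d) : ℝ≥0∞ := (ENNReal.ofReal (pnorm d ξ)) ^ (-s)

lemma ker_meas (d : ℕ) (s : ℝ) : Measurable (rker d s) := by
  unfold rker pnorm
  fun_prop

lemma pnorm_ge1 (d : ℕ) (ξ : Cyl d) : |ξ.2| ≤ pnorm d ξ := by
  rw [← Real.sqrt_sq_eq_abs]
  apply Real.sqrt_le_sqrt
  have : 0 ≤ ∑ i, ‖ξ.1 i‖ ^ 2 := Finset.sum_nonneg fun i _ => sq_nonneg _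
  linarith

lemma pnorm_ge2 (d : ℕ) (ξ : Cyl d) (i) : ‖ξ.1 i‖ ≤ pnorm d ξ := by
  rw [← Real.sqrt_sq (norm_nonneg (ξ.1 i))]
  apply Real.sqrt_le_sqrt
  have := Finset.single_le_sum (f := fun i => ‖ξ.1 i‖ ^ 2) (fun i _ => sq_nonneg _)
    (Finset.mem_univ i)
  have h2 := sq_nonneg ξ.2
  linarith

lemma anti (x y : ℝ) (h : x ≤ y) (s : ℝ) (hs : 0 ≤ s) :
    ENNReal.ofReal y ^ (-s) ≤ ENNReal.ofReal x ^ (-s) := by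
  rw [ENNReal.rpow_neg, ENNReal.rpow_neg, ENNReal.inv_le_inv]
  exact ENNReal.rpow_le_rpow (ENNReal.ofReal_le_ofReal h) hs

lemma ker_fin (d : ℕ) (hd : 2 ≤ d) (s : ℝ) (h1 : 1 < s) (h2 : s < d) :
    ∫⁻ ξ, rker d s ξ < ⊤ := by
  have hd0 : (0:ℝ) < d := by positivity
  set b := s / d with hb
  have hb0 : 0 ≤ b := by positivity
  have hb1 : b < 1 := (div_lt_one hd0).2 h2
  have key : ∀ ξ : Cyl d, rker d s ξ ≤
      (∏ i, ENNReal.ofReal ‖ξ.1 i‖ ^ (-b)) *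
        (if |ξ.2| < 1 then ENNReal.ofReal |ξ.2| ^ (-b) else 0)
      + (fun _ => 1) ξ.1 * (if |ξ.2| < 1 then 0 else ENNReal.ofReal |ξ.2| ^ (-s)) := by
    intro ξ
    split_ifs with h
    · simp only [mul_zero, add_zero]
      have e : rker d s ξ = (∏ i : Fin (d-1), ENNReal.ofReal (pnorm d ξ) ^ (-b)) *
          ENNReal.ofReal (pnorm d ξ) ^ (-b) := by
        rw [Finset.prod_const, Finset.card_univ, Fintype.card_fin, ← pow_succ,
          Nat.sub_add_cancel (by omega), ← ENNReal.rpow_natCast, ← ENNReal.rpow_mul, rker]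
        congr 1
        rw [hb]; field_simp
      rw [e]
      exact mul_le_mul' (Finset.prod_le_prod' fun i _ => anti _ _ (pnorm_ge2 d ξ i) b hb0)
        (anti _ _ (pnorm_ge1 d ξ) b hb0)
    · simp only [mul_zero, zero_add, one_mul]
      exact anti _ _ (pnorm_ge1 d ξ) s (by linarith)
  refine lt_of_le_of_lt (lintegral_mono key) ?_
  have ms : MeasurableSet {t : ℝ | |t| < 1} := measurableSet_lt (by fun_prop) (by fun_prop)
  have m1 : Measurable (fun t : ℝ => if |t| < 1 then ENNReal.ofReal |t| ^ (-b) else 0) :=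
    Measurable.ite ms (by fun_prop) (by fun_prop)
  have m2 : Measurable (fun t : ℝ => if |t| < 1 then 0 else ENNReal.ofReal |t| ^ (-s)) :=
    Measurable.ite ms (by fun_prop) (by fun_prop)
  have m3 : Measurable (fun x : Torus d => ∏ i, ENNReal.ofReal ‖x i‖ ^ (-b)) := by fun_prop
  have m4 : Measurable (fun x : Torus d => (1 : ℝ≥0∞)) := by fun_prop
  have m5 : Measurable (fun ξ : Cyl d => (∏ i, ENNReal.ofReal ‖ξ.1 i‖ ^ (-b)) *
        (if |ξ.2| < 1 then ENNReal.ofReal |ξ.2| ^ (-b) else 0)) :=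
    (m3.comp measurable_fst).mul (m1.comp measurable_snd)
  rw [lintegral_add_left m5,
    Measure.volume_eq_prod, lintegral_prod_mul m3.aemeasurable m1.aemeasurable,
    lintegral_prod_mul m4.aemeasurable m2.aemeasurable]
  refine ENNReal.add_lt_top.2 ⟨ENNReal.mul_lt_top (aux_torus _ b hb1) (aux_near b hb1),
    ENNReal.mul_lt_top ?_ (aux_far s h1)⟩
  simp

lemma ker_symm (d : ℕ) (s : ℝ) (x y : Cyl d) : rker d s (x - y) = rker d s (y - x) := by
  unfold rker pnorm
  have : ∀ i, ‖(x-y).1 i‖ = ‖(y-x).1 i‖ := fun i => by simp [norm_sub_rev]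
  simp only [this]
  congr 4
  simp only [Prod.snd_sub]; ring

lemma J_eq (d : ℕ) (α : ℝ) (E F : Set (Cyl d)) :
    Jalpha d α E F = ∫⁻ x in E, ∫⁻ y in F, rker d (d - α) (x - y) := rfl

lemma ker_meas2 (d : ℕ) (s : ℝ) :
    Measurable (fun p : Cyl d × Cyl d => rker d s (p.1 - p.2)) :=
  (ker_meas d s).comp (measurable_fst.sub measurable_snd)

lemma J_swap (d : ℕ) (α : ℝ) (E F : Set (Cyl d)) : Jalpha d α E F = Jalpha d α F E := by
  rw [J_eq, J_eq, lintegral_lintegral_swap (ker_meas2 d _).aemeasurable]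
  simp only [ker_symm d _ _]

instance aux_inv (d : ℕ) : (volume : Measure (Cyl d)).IsAddRightInvariant := by
  have : (volume : Measure (Torus d)).IsAddLeftInvariant := by
    rw [volume_pi]; infer_instance
  have : (volume : Measure (Cyl d)).IsAddLeftInvariant := by
    rw [Measure.volume_eq_prod]; infer_instance
  infer_instance

lemma J_le (d : ℕ) (α : ℝ) (E F : Set (Cyl d)) :
    Jalpha d α E F ≤ (∫⁻ ξ, rker d (d - α) ξ) * volume E := by
  rw [J_eq, ← setLIntegral_const]
  refine lintegral_mono fun x => ?_
  refine (setLIntegral_le_lintegral _ _).trans ?_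
  simp only [ker_symm d _ x]
  exact (lintegral_sub_right_eq_self (rker d (d - α)) x).le

lemma J_mono (d : ℕ) (α : ℝ) {E E' F F' : Set (Cyl d)} (h : E ⊆ E') (h' : F ⊆ F') :
    Jalpha d α E F ≤ Jalpha d α E' F' := by
  refine (lintegral_mono_set h).trans (lintegral_mono fun x => lintegral_mono_set h')

lemma J_union (d : ℕ) (α : ℝ) {A B F : Set (Cyl d)} (hB : MeasurableSet B) (h : Disjoint A B) :
    Jalpha d α (A ∪ B) F = Jalpha d α A F + Jalpha d α B F :=
  lintegral_union hB h

lemma slab_fin (d : ℕ) (a b : ℝ) : volume (slab2 d a b) < ⊤ := by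
  have : slab2 d a b = (univ : Set (Torus d)) ×ˢ Ioo a b := by ext; simp [slab2]
  rw [this, Measure.volume_eq_prod, Measure.prod_prod]
  exact ENNReal.mul_lt_top (by simp) (by simp)

/-- The `α`-Riesz perimeter is finite on periodic Lipschitz subgraphs, and the defining
limit exists (and equals `𝒫^α(E)`). -/
theorem Palpha_finite_on_lipschitz (d : ℕ) (hd : 2 ≤ d) (α : ℝ)
    (hα : 0 < α) (hα' : α < (d : ℝ) - 1) (L : ℝ) (hL : 0 < L)
    (E : Set (Cyl d)) (hE : E ∈ LipClass d L) :
    Palpha d α E < ⊤ ∧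
    Tendsto (fun R : ℝ => PalphaSlab d α (-R) (rhoSup d E) E) atTop
      (nhds (Palpha d α E)) := by
  obtain ⟨g, hg, rfl⟩ := hE
  have hgc := hg.continuous
  obtain ⟨m, hm⟩ := (isCompact_range hgc).bddBelow
  obtain ⟨M, hM⟩ := (isCompact_range hgc).bddAbove
  have hm' : ∀ x, m ≤ g x := fun x => hm ⟨x, rfl⟩
  have hM' : ∀ x, g x ≤ M := fun x => hM ⟨x, rfl⟩
  have hne : subgraph d g ≠ ∅ := by
    rw [← nonempty_iff_ne_empty]
    exact ⟨(0, g 0), le_refl (g 0)⟩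
  have hbdd : BddTop d (subgraph d g) := by
    refine ⟨M + 1, fun x hx => ?_⟩
    have h1 : x.2 ≤ g x.1 := hx
    have := hM' x.1
    show x.2 < M + 1
    linarith
  have hP : Palpha d α (subgraph d g) =
      limsup (fun R : ℝ => PalphaSlab d α (-R) (rhoSup d (subgraph d g)) (subgraph d g)) atTop := by
    rw [Palpha, if_neg hne, if_pos hbdd]
  rw [hP]
  set ρ := rhoSup d (subgraph d g)
  set E := subgraph d g with hEdef
  have hEm : MeasurableSet E :=
    measurableSet_le measurable_snd (hgc.measurable.comp measurable_fst)
  have hSm : ∀ a b, MeasurableSet (slab2 d a b) := fun a b =>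
    (measurableSet_lt measurable_const measurable_snd).inter
      (measurableSet_lt measurable_snd measurable_const)
  set K := ∫⁻ ξ, rker d (d - α) ξ with hK
  have hKfin : K < ⊤ := ker_fin d hd _ (by linarith) (by linarith)
  set B : Set (Cyl d) := slab2 d (m - 1) ρ \ E with hBdef
  have hBm : MeasurableSet B := (hSm _ _).diff hEm
  have hBfin : volume B < ⊤ := (measure_mono sdiff_subset).trans_lt (slab_fin d _ _)
  let F : ℝ → ℝ≥0∞ := fun R =>
    Jalpha d α B (E ∩ slab2 d (-R) ρ) + Jalpha d α B (slab2 d (-R) ρ)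
  have hslab : ∀ R R' : ℝ, R ≤ R' → slab2 d (-R) ρ ⊆ slab2 d (-R') ρ := by
    intro R R' h x hx
    have h1 : -R < x.2 := hx.1
    exact ⟨by linarith, hx.2⟩
  have hFmono : Monotone F := fun R R' h => add_le_add
    (J_mono d α le_rfl (inter_subset_inter_right _ (hslab _ _ h)))
    (J_mono d α le_rfl (hslab _ _ h))
  have hFle : ∀ R, F R ≤ K * volume B + K * volume B := fun R =>
    add_le_add (J_le d α _ _) (J_le d α _ _)
  have hev : ∀ᶠ R in atTop, F R = PalphaSlab d α (-R) ρ E := by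
    filter_upwards [eventually_ge_atTop (1 - m)] with R hR
    have hdec : slab2 d (-R) ρ = (E ∩ slab2 d (-R) ρ) ∪ B := by
      ext x
      constructor
      · intro hx
        by_cases hxE : x ∈ E
        · exact Or.inl ⟨hxE, hx⟩
        · refine Or.inr ⟨⟨?_, hx.2⟩, hxE⟩
          have h1 : ¬ x.2 ≤ g x.1 := hxE
          have h2 := hm' x.1
          linarith
      · rintro (hx | hx)
        · exact hx.2
        · have h1 : m - 1 < x.2 := hx.1.1
          exact ⟨by linarith, hx.1.2⟩
    have hdis : Disjoint (E ∩ slab2 d (-R) ρ) B :=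
      disjoint_sdiff_right.mono_left inter_subset_left
    have hAA : Jalpha d α (E ∩ slab2 d (-R) ρ) (E ∩ slab2 d (-R) ρ) ≠ ⊤ :=
      ((J_le d α _ _).trans_lt (ENNReal.mul_lt_top hKfin
        ((measure_mono inter_subset_right).trans_lt (slab_fin d _ _)))).ne
    have hsum : Jalpha d α (slab2 d (-R) ρ) (slab2 d (-R) ρ)
        = Jalpha d α (E ∩ slab2 d (-R) ρ) (E ∩ slab2 d (-R) ρ) + F R := by
      have e1 : Jalpha d α (slab2 d (-R) ρ) (slab2 d (-R) ρ) =
          Jalpha d α (E ∩ slab2 d (-R) ρ) (slab2 d (-R) ρ) + Jalpha d α B (slab2 d (-R) ρ) := by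
        rw [← J_union d α hBm hdis, ← hdec]
      have e2 : Jalpha d α (E ∩ slab2 d (-R) ρ) (slab2 d (-R) ρ) =
          Jalpha d α (E ∩ slab2 d (-R) ρ) (E ∩ slab2 d (-R) ρ)
            + Jalpha d α B (E ∩ slab2 d (-R) ρ) := by
        rw [← J_union d α hBm hdis, ← hdec, J_swap]
      rw [e1, e2, add_assoc]
    rw [PalphaSlab, hsum, ENNReal.add_sub_cancel_left hAA]
  have ht : Tendsto (fun R : ℝ => PalphaSlab d α (-R) ρ E) atTop (nhds (⨆ R, F R)) :=
    (tendsto_atTop_iSup hFmono).congr' hev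
  rw [ht.limsup_eq]
  refine ⟨lt_of_le_of_lt (iSup_le hFle) ?_, ht⟩
  have := ENNReal.mul_lt_top hKfin hBfin
  exact ENNReal.add_lt_top.2 ⟨this, this⟩
end
end
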